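/- arXiv:1910.13857 — 3 statements merged into one kernel-verified Lean document; each statement's English description precedes it below -/
import Mathlib

section
/- Let a_1, …, a_n be nonnegative real numbers with a_1 > 0. Then √(Σ_{i=1}^n a_i) ≤ Σ_{i=1}^n a_i / √(Σ_{j=1}^i a_j) ≤ 2 √(Σ_{i=1}^n a_i). -/
/-!
With partial sums `S i`, both bounds follow by telescoping from
`√(S i) - √(S (i-1)) ≤ a i / √(S i) ≤ 2 * (√(S i) - √(S (i-1)))`. Writing `p = √(S (i-1))` and
`q = √(S i)`, the middle term is `(q² - p²) / q = (q - p) (1 + p / q)`, and `0 ≤ p / q ≤ 1`.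
-/

/-- One increment of the telescoping argument. It also holds for `s = x = 0`, since `0 / 0 = 0`,
so the induction can start from the empty sum. -/
lemma sqrt_increment_bounds {s x : ℝ} (hs : 0 ≤ s) (hx : 0 ≤ x) :
    √(s + x) - √s ≤ x / √(s + x) ∧ x / √(s + x) ≤ 2 * (√(s + x) - √s) := by
  have hp := Real.sqrt_nonneg s
  have hpq : √s ≤ √(s + x) := Real.sqrt_le_sqrt (by linarith)
  have hp2 := Real.sq_sqrt hs
  have hq2 := Real.sq_sqrt (add_nonneg hs hx)
  rcases (hp.trans hpq).eq_or_lt with h0 | hq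
  · have hs0 : √s = 0 := by linarith
    simp [← h0, hs0]
  · rw [le_div_iff₀ hq, div_le_iff₀ hq]
    constructor
    · nlinarith [mul_nonneg hp (sub_nonneg.2 hpq)]
    · nlinarith [sq_nonneg (√(s + x) - √s)]

/-- Technical sum inequality (Lemma 2 of the paper):
`√(Σ_{i=1}^n a_i) ≤ Σ_{i=1}^n a_i/√(Σ_{j=1}^i a_j) ≤ 2√(Σ_{i=1}^n a_i)`. -/
theorem sqrt_sum_div_sqrt_partial_sum
    (n : ℕ) (hn : 1 ≤ n) (a : ℕ → ℝ)
    (ha : ∀ i ∈ Finset.Icc 1 n, 0 ≤ a i) (ha1 : 0 < a 1) :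
    Real.sqrt (∑ i ∈ Finset.Icc 1 n, a i) ≤
        ∑ i ∈ Finset.Icc 1 n, a i / Real.sqrt (∑ j ∈ Finset.Icc 1 i, a j) ∧
      ∑ i ∈ Finset.Icc 1 n, a i / Real.sqrt (∑ j ∈ Finset.Icc 1 i, a j) ≤
        2 * Real.sqrt (∑ i ∈ Finset.Icc 1 n, a i) := by
  clear hn ha1
  induction n with
  | zero => simp
  | succ k ih =>
    have hak : ∀ i ∈ Finset.Icc 1 k, 0 ≤ a i := fun i hi =>
      ha i (Finset.Icc_subset_Icc_right k.le_succ hi)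
    obtain ⟨ih_lower, ih_upper⟩ := ih hak
    obtain ⟨h_lower, h_upper⟩ := sqrt_increment_bounds (Finset.sum_nonneg hak)
      (ha (k + 1) (Finset.mem_Icc.2 ⟨by omega, le_rfl⟩))
    rw [Finset.sum_Icc_succ_top (by omega), Finset.sum_Icc_succ_top (by omega),
      Finset.sum_Icc_succ_top (by omega)]
    constructor <;> linarith
end

section
/- Let E be a finite-dimensional real inner product space, D > 0, L > 0, T ≥ 1, α_t = t, and let g_1, …, g_T, M_1, …, M_T ∈ E be arbitrary vectors. Define η_t = 2D / √(1 + Σ_{i=1}^{t−1} α_i² ‖g_i − M_i‖²). If τ* ∈ {1, …, T} satisfies 1/η_{τ*+1}² ≤ 7 L², then (1/2) Σ_{t=1}^{τ*} η_{t+1} α_t² ‖g_t − M_t‖² + D/2 ≤ 4 √7 D² L. -/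
/-!
Put `a t = t² ‖g t - M t‖²` and `S n = 1 + ∑_{t ≤ n} a t`, so that `η (t + 1) = 2 D / √(S t)`.
Each term satisfies `a t / √(S t) ≤ 2 √(S t) - 2 √(S (t - 1))`, and telescoping bounds the
left-hand side by `2 D (√(S τ) - 1) + D / 2 ≤ 2 D √(S τ)` (`sum_div_sqrt_le`).
The hypothesis on `η (τ + 1)` reads `S τ ≤ 7 (2 D L)²`, that is `√(S τ) ≤ 2 √7 D L`.
-/

/-- Telescoped form of `∑ a t / √(S t) ≤ 2 √(S n)`; the offset `1` in `S` keeps every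
denominator positive and contributes the `- 2`, which later absorbs the summand `D / 2`. -/
lemma sum_div_sqrt_le (a : ℕ → ℝ) (ha : ∀ t, 0 ≤ a t) (n : ℕ) :
    ∑ t ∈ Finset.Icc 1 n, a t / Real.sqrt (1 + ∑ i ∈ Finset.Icc 1 t, a i) ≤
      2 * Real.sqrt (1 + ∑ i ∈ Finset.Icc 1 n, a i) - 2 := by
  induction n with
  | zero => simp
  | succ n ih =>
    rw [Finset.sum_Icc_succ_top (by omega)]
    have hS : 0 ≤ ∑ i ∈ Finset.Icc 1 n, a i := Finset.sum_nonneg fun i _ => ha i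
    have hsucc : ∑ i ∈ Finset.Icc 1 (n + 1), a i = ∑ i ∈ Finset.Icc 1 n, a i + a (n + 1) :=
      Finset.sum_Icc_succ_top (by omega) _
    have han := ha (n + 1)
    have hx := Real.sq_sqrt (show 0 ≤ 1 + ∑ i ∈ Finset.Icc 1 n, a i by linarith)
    have hy := Real.sq_sqrt (show 0 ≤ 1 + ∑ i ∈ Finset.Icc 1 (n + 1), a i by linarith)
    have hypos : 0 < Real.sqrt (1 + ∑ i ∈ Finset.Icc 1 (n + 1), a i) :=
      Real.sqrt_pos.2 (by linarith)
    set x := Real.sqrt (1 + ∑ i ∈ Finset.Icc 1 n, a i)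
    set y := Real.sqrt (1 + ∑ i ∈ Finset.Icc 1 (n + 1), a i)
    -- With `a (n + 1) = y² - x²` the step is `(y - x)² ≥ 0`.
    have step : a (n + 1) / y ≤ 2 * y - 2 * x := by
      rw [div_le_iff₀ hypos]
      nlinarith [sq_nonneg (y - x)]
    linarith

/-- Bound on term (A) in the proof of Theorem 3 of the paper. -/
theorem term_A_bound
    {E : Type*} [NormedAddCommGroup E] [InnerProductSpace ℝ E] [FiniteDimensional ℝ E]
    (D L : ℝ) (hD : 0 < D) (hL : 0 < L) (T : ℕ) (hT : 1 ≤ T)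
    (g M : ℕ → E) (η : ℕ → ℝ)
    (hη : ∀ t, η t =
      2 * D / Real.sqrt (1 + ∑ i ∈ Finset.Icc 1 (t - 1), (i : ℝ)^2 * ‖g i - M i‖^2))
    (τ : ℕ) (hτ : τ ∈ Finset.Icc 1 T)
    (hτη : 1 / (η (τ + 1))^2 ≤ 7 * L^2) :
    (1 / 2) * (∑ t ∈ Finset.Icc 1 τ, η (t + 1) * (t : ℝ)^2 * ‖g t - M t‖^2) + D / 2 ≤
      4 * Real.sqrt 7 * D^2 * L := by
  have ha : ∀ t : ℕ, 0 ≤ (t : ℝ)^2 * ‖g t - M t‖^2 := fun t => by positivity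
  have key := sum_div_sqrt_le (fun t : ℕ => (t : ℝ)^2 * ‖g t - M t‖^2) ha τ
  have hsum : (1 / 2) * (∑ t ∈ Finset.Icc 1 τ, η (t + 1) * (t : ℝ)^2 * ‖g t - M t‖^2) =
      D * ∑ t ∈ Finset.Icc 1 τ, ((t : ℝ)^2 * ‖g t - M t‖^2) /
        Real.sqrt (1 + ∑ i ∈ Finset.Icc 1 t, (i : ℝ)^2 * ‖g i - M i‖^2) := by
    rw [Finset.mul_sum, Finset.mul_sum]
    refine Finset.sum_congr rfl fun t _ => ?_
    rw [hη, Nat.add_sub_cancel]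
    ring
  rw [hsum]
  have hS : 0 ≤ ∑ i ∈ Finset.Icc 1 τ, (i : ℝ)^2 * ‖g i - M i‖^2 :=
    Finset.sum_nonneg fun i _ => ha i
  rw [hη, Nat.add_sub_cancel, div_pow, one_div_div, Real.sq_sqrt (by linarith),
    div_le_iff₀ (by positivity)] at hτη
  have hroot : Real.sqrt (1 + ∑ i ∈ Finset.Icc 1 τ, (i : ℝ)^2 * ‖g i - M i‖^2) ≤
      2 * Real.sqrt 7 * D * L := by
    refine Real.sqrt_le_iff.2 ⟨by positivity, hτη.trans_eq ?_⟩
    linear_combination (-4 * D^2 * L^2) * Real.sq_sqrt (show (0 : ℝ) ≤ 7 by norm_num)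
  have h1 := mul_le_mul_of_nonneg_left key hD.le
  have h2 := mul_le_mul_of_nonneg_left hroot hD.le
  linarith
end

section
/- Let E be a finite-dimensional real inner product space, D > 0, L > 0, T ≥ 1, α_t = t, and let g_1, …, g_T, M_1, …, M_T ∈ E be arbitrary vectors. Define η_t = 2D / √(1 + Σ_{i=1}^{t−1} α_i² ‖g_i − M_i‖²). If τ* ∈ {1, …, T} satisfies 1/η_{τ*+1}² ≤ 7 L², then 3D²/η_{T+1} − (3/4) Σ_{t=τ*+1}^{T} η_{t+1} α_t² ‖g_t − M_t‖² ≤ 6 √7 D² L. -/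
/-!
Put `S n = 1 + ∑_{i ≤ n} i² ‖g i - M i‖²`, so that `η (n + 1) = 2 D / √(S n)` and
`3 D² / η (n + 1) = (3 D / 2) √(S n)`. Concavity of the square root, in the form
`√y - √x ≤ (y - x) / √y`, gives
`(3 / 4) η (t + 1) t² ‖g t - M t‖² ≥ (3 D / 2) (√(S t) - √(S (t - 1)))`.
Summing over `τ < t ≤ T` telescopes (`telescoped_bound`), so the left-hand side of the theorem
is at most `3 D² / η (τ + 1)`, hence at most `3 √7 D² L`, half of the claimed bound.
-/

theorem sqrt_sub_sqrt_le_div {x y : ℝ} (hx : 0 ≤ x) (hy : 0 < y) (hxy : x ≤ y) :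
    √y - √x ≤ (y - x) / √y := by
  have hq : 0 < √y := Real.sqrt_pos.mpr hy
  rw [le_div_iff₀ hq]
  -- After clearing the denominator the claim is `0 ≤ √x (√y - √x)`.
  nlinarith [Real.sq_sqrt hx, Real.sq_sqrt hy.le,
    mul_nonneg (Real.sqrt_nonneg x) (sub_nonneg.mpr (Real.sqrt_le_sqrt hxy))]

/-- Telescoped form of `sqrt_sub_sqrt_le_div` for the partial sums of a nonnegative sequence. -/
theorem telescoped_bound (a : ℕ → ℝ) (ha : ∀ i, 0 ≤ a i) (τ T : ℕ) (h : τ ≤ T) :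
    √(1 + ∑ i ∈ Finset.Icc 1 T, a i)
        - ∑ t ∈ Finset.Icc (τ + 1) T, a t / √(1 + ∑ i ∈ Finset.Icc 1 t, a i)
      ≤ √(1 + ∑ i ∈ Finset.Icc 1 τ, a i) := by
  induction T, h using Nat.le_induction with
  | base => simp
  | succ n hn ih =>
    have hpos : 0 ≤ ∑ i ∈ Finset.Icc 1 n, a i := Finset.sum_nonneg fun i _ => ha i
    have hS : ∑ i ∈ Finset.Icc 1 (n + 1), a i = ∑ i ∈ Finset.Icc 1 n, a i + a (n + 1) :=
      Finset.sum_Icc_succ_top (by omega) _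
    rw [Finset.sum_Icc_succ_top (by omega : τ + 1 ≤ n + 1), hS]
    have key := sqrt_sub_sqrt_le_div (x := 1 + ∑ i ∈ Finset.Icc 1 n, a i)
      (y := 1 + (∑ i ∈ Finset.Icc 1 n, a i + a (n + 1))) (by linarith)
      (by linarith [ha (n + 1)]) (by linarith [ha (n + 1)])
    rw [show 1 + (∑ i ∈ Finset.Icc 1 n, a i + a (n + 1)) - (1 + ∑ i ∈ Finset.Icc 1 n, a i)
      = a (n + 1) by ring] at key
    linarith

/-- Bound on term (B) in the proof of Theorem 3 of the paper. -/
theorem term_B_bound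
    {E : Type*} [NormedAddCommGroup E] [InnerProductSpace ℝ E] [FiniteDimensional ℝ E]
    (D L : ℝ) (hD : 0 < D) (hL : 0 < L) (T : ℕ) (hT : 1 ≤ T)
    (g M : ℕ → E) (η : ℕ → ℝ)
    (hη : ∀ t, η t =
      2 * D / Real.sqrt (1 + ∑ i ∈ Finset.Icc 1 (t - 1), (i : ℝ)^2 * ‖g i - M i‖^2))
    (τ : ℕ) (hτ : τ ∈ Finset.Icc 1 T)
    (hτη : 1 / (η (τ + 1))^2 ≤ 7 * L^2) :
    3 * D^2 / η (T + 1) -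
        (3 / 4) * (∑ t ∈ Finset.Icc (τ + 1) T, η (t + 1) * (t : ℝ)^2 * ‖g t - M t‖^2) ≤
      6 * Real.sqrt 7 * D^2 * L := by
  set a : ℕ → ℝ := fun i => (i : ℝ)^2 * ‖g i - M i‖^2 with ha_def
  have ha : ∀ i, 0 ≤ a i := fun i => by positivity
  have hη' : ∀ n, η (n + 1) = 2 * D / √(1 + ∑ i ∈ Finset.Icc 1 n, a i) := fun n => by
    simpa using hη (n + 1)
  have hS : ∀ n, 0 < √(1 + ∑ i ∈ Finset.Icc 1 n, a i) := fun n =>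
    Real.sqrt_pos.mpr (by linarith [Finset.sum_nonneg fun i (_ : i ∈ Finset.Icc 1 n) => ha i])
  have hsum : ∑ t ∈ Finset.Icc (τ + 1) T, η (t + 1) * (t : ℝ)^2 * ‖g t - M t‖^2
      = 2 * D * ∑ t ∈ Finset.Icc (τ + 1) T, a t / √(1 + ∑ i ∈ Finset.Icc 1 t, a i) := by
    rw [Finset.mul_sum]
    refine Finset.sum_congr rfl fun t _ => ?_
    rw [hη' t, mul_assoc]
    change _ * a t = _
    ring
  have hfirst : 3 * D^2 / η (T + 1) = 3 / 2 * D * √(1 + ∑ i ∈ Finset.Icc 1 T, a i) := by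
    rw [hη' T]
    have := (hS T).ne'
    field_simp
  have htel := telescoped_bound a ha τ T (Finset.mem_Icc.mp hτ).2
  have hτbound : √(1 + ∑ i ∈ Finset.Icc 1 τ, a i) ≤ 2 * D * (√7 * L) := by
    have hinv : 1 / η (τ + 1) ≤ √7 * L := by
      refine le_of_pow_le_pow_left₀ two_ne_zero (by positivity) ?_
      rw [mul_pow, Real.sq_sqrt (by norm_num), div_pow, one_pow]
      exact hτη
    rw [hη' τ, one_div_div, div_le_iff₀ (by positivity)] at hinv
    linarith
  rw [hsum, hfirst]
  have h1 := mul_le_mul_of_nonneg_left (htel.trans hτbound) (by positivity : 0 ≤ 3 / 2 * D)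
  have h2 : 0 ≤ √7 * D^2 * L := by positivity
  linarith
end
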